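/- Let H be the heart of a bounded t-structure on a triangulated category D, and suppose the projectives of H span H, i.e. whenever M ∈ H satisfies Hom(P, M) = 0 for every projective P of H, then M = 0. Then for every object M of D: M lies in H if and only if Hom(P, M[k]) = 0 for every projective P of H and every integer k ≠ 0. -/

import Mathlib

open CategoryTheory Category Limits Pretriangulated ZeroObject

universe v u

namespace Paper

variable (C : Type u) [Category.{v} C] [HasZeroObject C] [HasShift C ℤ]
  [Preadditive C] [∀ n : ℤ, (shiftFunctor C n).Additive] [Pretriangulated C]

/-- The right perpendicular of a set of objects: objects receiving no nonzero
morphism from the set. -/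
def perp (P : Set C) : Set C := {G | ∀ F ∈ P, ∀ f : F ⟶ G, f = 0}

/-- A bounded t-structure on a (pre)triangulated category, given by its aisle `P`. -/
structure TStr where
  P : Set C
  /-- `P` is closed under direct summands (hence under isomorphism). -/
  summand : ∀ (X Y : C) (i : Y ⟶ X) (r : X ⟶ Y), i ≫ r = 𝟙 Y → X ∈ P → Y ∈ P
  /-- `P[1] ⊆ P`. -/
  shift_mem : ∀ X ∈ P, X⟦(1 : ℤ)⟧ ∈ P
  /-- Every object fits in a triangle `F → E → G → F[1]` with `F ∈ P` and `G ∈ P^⊥`. -/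
  exists_triangle : ∀ E : C, ∃ (F G : C) (f : F ⟶ E) (g : E ⟶ G) (h : G ⟶ F⟦(1 : ℤ)⟧),
    F ∈ P ∧ G ∈ perp C P ∧ Triangle.mk f g h ∈ distTriang C
  /-- `M[k] ∈ P` for `k ≫ 0`. -/
  bounded_above : ∀ M : C, ∃ a : ℤ, ∀ j : ℤ, a ≤ j → M⟦j⟧ ∈ P
  /-- `M[k] ∈ P^⊥` for `k ≪ 0`. -/
  bounded_below : ∀ M : C, ∃ b : ℤ, ∀ j : ℤ, j ≤ b → M⟦j⟧ ∈ perp C P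

/-- The heart `H = P^⊥[1] ∩ P` of a bounded t-structure. -/
def heart (T : TStr C) : Set C := {X | X ∈ T.P ∧ X⟦(-1 : ℤ)⟧ ∈ perp C T.P}

/-- The shift `S[m]` of a set of objects. -/
def shiftSet (S : Set C) (m : ℤ) : Set C := {X | X⟦(-m : ℤ)⟧ ∈ S}

/-- An object `P` is a projective of a heart if `Hom(P, M[k]) = 0` for all `k ≠ 0`
and all `M` in the heart. -/
def IsProjOf (T : TStr C) (P : C) : Prop :=
  ∀ (k : ℤ), k ≠ 0 → ∀ M ∈ heart C T, ∀ f : P ⟶ M⟦k⟧, f = 0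

/-- A filtration of an object `M` by triangles with factors in the heart, shifted by a
strictly decreasing sequence of degrees: the canonical filtration associated to a bounded
t-structure. -/
structure HeartFiltration (T : TStr C) (M : C) where
  n : ℕ
  obj : ℕ → C
  deg : ℕ → ℤ
  factor : ℕ → C
  zero : IsZero (obj 0)
  top : obj n ≅ M
  mem : ∀ i, 1 ≤ i → i ≤ n → factor i ∈ heart C T
  strict : ∀ i j, 1 ≤ i → i < j → j ≤ n → deg j < deg i
  tri : ∀ i, 1 ≤ i → i ≤ n →
    ∃ (f : obj (i - 1) ⟶ obj i) (g : obj i ⟶ (factor i)⟦deg i⟧)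
      (h : (factor i)⟦deg i⟧ ⟶ (obj (i - 1))⟦(1 : ℤ)⟧),
      Triangle.mk f g h ∈ distTriang C

variable {C}

open Classical in
/-- The homology `H^k(M)` of `M` with respect to the heart, read off from a
filtration: the factor in degree `k` if there is one, and `0` otherwise. -/
noncomputable def HeartFiltration.homologyAt {T : TStr C} {M : C}
    (F : HeartFiltration C T M) (k : ℤ) : C :=
  if h : ∃ i, 1 ≤ i ∧ i ≤ F.n ∧ F.deg i = k then F.factor h.choose else 0

variable (C)

/-- A torsion pair `⟨F, T⟩` in the heart of a bounded t-structure: `Hom(T, F) = 0` and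
every object of the heart is an extension (triangle) of an `F`-object by a `T`-object. -/
structure TorsionPairIn (T : TStr C) where
  free : Set C
  tor : Set C
  free_sub : free ⊆ heart C T
  tor_sub : tor ⊆ heart C T
  hom_zero : ∀ X ∈ tor, ∀ Y ∈ free, ∀ f : X ⟶ Y, f = 0
  exists_ses : ∀ E ∈ heart C T, ∃ (A B : C) (f : A ⟶ E) (g : E ⟶ B) (h : B ⟶ A⟦(1 : ℤ)⟧),
    A ∈ tor ∧ B ∈ free ∧ Triangle.mk f g h ∈ distTriang C

/-- The forward tilt `H^♯` of the heart at a torsion pair `⟨free, tor⟩`: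
objects `E` with `H^1(E) ∈ F`, `H^0(E) ∈ T` and `H^i(E) = 0` otherwise. -/
def tiltSharpSet (T : TStr C) (free tor : Set C) : Set C :=
  {E | ∀ (F : HeartFiltration C T E) (i : ℕ), 1 ≤ i → i ≤ F.n →
    IsZero (F.factor i) ∨ (F.deg i = 1 ∧ F.factor i ∈ free) ∨
      (F.deg i = 0 ∧ F.factor i ∈ tor)}

/-- The backward tilt `H^♭` of the heart at a torsion pair `⟨free, tor⟩`:
objects `E` with `H^0(E) ∈ F`, `H^{-1}(E) ∈ T` and `H^i(E) = 0` otherwise. -/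
def tiltFlatSet (T : TStr C) (free tor : Set C) : Set C :=
  {E | ∀ (F : HeartFiltration C T E) (i : ℕ), 1 ≤ i → i ≤ F.n →
    IsZero (F.factor i) ∨ (F.deg i = 0 ∧ F.factor i ∈ free) ∨
      (F.deg i = -1 ∧ F.factor i ∈ tor)}

/-- Simple objects of a heart (or of any full subcategory closed under the abelian
structure): nonzero objects which are not the middle term of a nontrivial short exact
sequence (triangle) in the heart. -/
def IsSimpleIn (H : Set C) (X : C) : Prop :=
  X ∈ H ∧ ¬ IsZero X ∧ ∀ (A B : C) (f : A ⟶ X) (g : X ⟶ B) (h : B ⟶ A⟦(1 : ℤ)⟧),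
    A ∈ H → B ∈ H → Triangle.mk f g h ∈ (distTriang C) → IsZero A ∨ IsZero B

/-- A heart is finite if it has finitely many simples up to isomorphism and every object
is a finite iterated extension of simple objects. -/
def FiniteHeart (T : TStr C) : Prop :=
  (∃ (n : ℕ) (S : Fin n → C), (∀ i, IsSimpleIn C (heart C T) (S i)) ∧
    ∀ X, IsSimpleIn C (heart C T) X → ∃ i, Nonempty (X ≅ S i)) ∧
  ∀ M ∈ heart C T, ∃ (m : ℕ) (obj : ℕ → C), IsZero (obj 0) ∧ Nonempty (obj m ≅ M) ∧
    ∀ i < m, ∃ (s : C) (f : obj i ⟶ obj (i + 1)) (g : obj (i + 1) ⟶ s)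
      (h : s ⟶ (obj i)⟦(1 : ℤ)⟧),
      IsSimpleIn C (heart C T) s ∧ Triangle.mk f g h ∈ distTriang C

section Biproducts

variable [HasFiniteBiproducts C]

/-- Finite direct sums of copies of an object `S`. -/
def addObj (S : C) : Set C := {M | ∃ n : ℕ, Nonempty (M ≅ ⨁ (fun _ : Fin n => S))}

/-- The simple forward tilt `H^♯_S` of the heart at a rigid simple `S`: the forward tilt
at the torsion pair whose free part consists of finite direct sums of copies of `S`. -/
def simpleSharpSet (T : TStr C) (S : C) : Set C :=
  tiltSharpSet C T (addObj C S) {M | M ∈ heart C T ∧ ∀ f : M ⟶ S, f = 0}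

/-- The simple backward tilt `H^♭_S` of the heart at a rigid simple `S`: the backward
tilt at the torsion pair whose torsion part consists of finite direct sums of copies
of `S`. -/
def simpleFlatSet (T : TStr C) (S : C) : Set C :=
  tiltFlatSet C T {M | M ∈ heart C T ∧ ∀ f : S ⟶ M, f = 0} (addObj C S)

end Biproducts

/-!
Let `P` be projective and `X` bounded. Filtering `X` by shifts of objects of the heart shows that
`Hom(P, X) = 0` as soon as the cohomology of `X` vanishes in degree `0`. If now `X` has cohomology
only in degrees `≤ 0`, then in the triangle `X ⟶ H⁰(X) ⟶ τ^{<0}(X)[1]` the third object receives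
no nonzero morphism from a projective. So if `X` receives none either, the same holds for `H⁰(X)`,
and `H⁰(X) = 0` since the projectives span the heart. Applied to `X = M[n]`, this kills the
cohomology of `M` in positive degrees from the top down; dually, negative degrees are killed from
the bottom up.
-/

open Triangulated

variable {C}

section Truncation

variable (t : TStructure C)

lemma isLE_truncGE_obj_of_isLE (X : C) (m n : ℤ) [t.IsLE X n] :
    t.IsLE ((t.truncGE m).obj X) n := by
  by_cases hmn : m ≤ n
  · have := t.isLE_truncLT_obj X m (n + 1)
    exact t.isLE₂ _ (rot_of_distTriang _ (t.triangleLTGE_distinguished m X)) n ‹t.IsLE X n›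
      (t.isLE_shift ((t.truncLT m).obj X) (n + 1) 1 n)
  · have := t.isLE_of_le X n (m - 1)
    exact t.isLE_of_isZero (t.isZero_truncGE_obj_of_isLE (m - 1) m (by lia) X) n

lemma isGE_truncLT_obj_of_isGE (X : C) (m n : ℤ) [t.IsGE X n] :
    t.IsGE ((t.truncLT m).obj X) n := by
  by_cases hmn : n ≤ m
  · have := t.isGE_truncGE_obj X m (n - 1)
    exact t.isGE₂ _ (inv_rot_of_distTriang _ (t.triangleLTGE_distinguished m X)) n
      (t.isGE_shift ((t.truncGE m).obj X) (n - 1) (-1) n) ‹t.IsGE X n›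
  · have := t.isGE_of_ge X m n
    exact t.isGE_of_isZero (t.isZero_truncLT_obj_of_isGE m X) n

lemma plus_truncLT_obj {X : C} (hX : t.plus X) (m : ℤ) : t.plus ((t.truncLT m).obj X) := by
  obtain ⟨n, _⟩ := hX
  exact ⟨n, isGE_truncLT_obj_of_isGE t X m n⟩

lemma minus_truncGE_obj {X : C} (hX : t.minus X) (m : ℤ) : t.minus ((t.truncGE m).obj X) := by
  obtain ⟨n, _⟩ := hX
  exact ⟨n, isLE_truncGE_obj_of_isLE t X m n⟩

lemma prop_of_isLE_of_isGE (Q : ObjectProperty C) [Q.ContainsZero]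
    [Q.IsClosedUnderIsomorphisms] [Q.IsTriangulatedClosed₂] {m n : ℤ}
    (hQ : ∀ k, m ≤ k → k ≤ n → ∀ Y : C, t.IsLE Y k → t.IsGE Y k → Q Y)
    (X : C) [t.IsLE X n] [t.IsGE X m] : Q X := by
  by_cases hnm : n < m
  · exact Q.prop_of_isZero (t.isZero X n m)
  replace hnm : m - 1 ≤ n := by lia
  induction n, hnm using Int.leInduction generalizing X with
  | base => exact Q.prop_of_isZero (t.isZero X (m - 1) m)
  | succ n hmn ih =>
    have := t.isLE_truncLT_obj X (n + 1) n
    have := isGE_truncLT_obj_of_isGE t X (n + 1) m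
    exact Q.ext_of_isTriangulatedClosed₂ _ (t.triangleLTGE_distinguished (n + 1) X)
      (ih (fun k hk hkn ↦ hQ k hk (by lia)) ((t.truncLT (n + 1)).obj X))
      (hQ (n + 1) (by lia) le_rfl _ (isLE_truncGE_obj_of_isLE t X (n + 1) (n + 1))
        (t.isGE_truncGE_obj X (n + 1) (n + 1)))

end Truncation

section Projective

variable (t : TStructure C)

/-- The projectives of the heart of a t-structure `t`. As in `IsProjOf`, these are objects of the
ambient category, not required to lie in the heart. -/
def heartProjective : ObjectProperty C :=
  fun P ↦ ∀ k : ℤ, k ≠ 0 → ∀ M, t.heart M → ∀ f : P ⟶ M⟦k⟧, f = 0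

/-- A family `S` of objects spans the heart of `t` if no nonzero object of the heart is right
orthogonal to `S`. -/
def SpansHeart (S : ObjectProperty C) : Prop :=
  ∀ M, t.heart M → S.rightOrthogonal M → IsZero M

variable {t} {S : ObjectProperty C}

lemma rightOrthogonal_of_isLE_of_isGE (hS : S ≤ heartProjective t) {n : ℤ} (hn : n ≠ 0)
    (X : C) [t.IsLE X n] [t.IsGE X n] : S.rightOrthogonal X := by
  have hX : t.heart (X⟦n⟧) :=
    (t.mem_heart_iff _).2 ⟨t.isLE_shift X n n 0, t.isGE_shift X n n 0⟩
  exact S.rightOrthogonal.prop_of_iso ((shiftFunctorCompIsoId C n (-n) (by lia)).app X)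
    fun P f hP ↦ hS P hP (-n) (by lia) _ hX f

lemma rightOrthogonal_of_isLE_of_plus (hS : S ≤ heartProjective t) {n : ℤ} (hn : n < 0)
    {X : C} [t.IsLE X n] (hX : t.plus X) : S.rightOrthogonal X := by
  obtain ⟨m, _⟩ := hX
  exact prop_of_isLE_of_isGE t S.rightOrthogonal (m := m) (n := n)
    (fun k _ hkn Y _ _ ↦ rightOrthogonal_of_isLE_of_isGE hS (by lia : k ≠ 0) Y) X

lemma rightOrthogonal_of_isGE_of_minus (hS : S ≤ heartProjective t) {m : ℤ} (hm : 0 < m)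
    {X : C} [t.IsGE X m] (hX : t.minus X) : S.rightOrthogonal X := by
  obtain ⟨n, _⟩ := hX
  exact prop_of_isLE_of_isGE t S.rightOrthogonal (m := m) (n := n)
    (fun k hmk _ Y _ _ ↦ rightOrthogonal_of_isLE_of_isGE hS (by lia : k ≠ 0) Y) X

lemma SpansHeart.isLE_neg_one (hspan : SpansHeart t S) (hS : S ≤ heartProjective t) {X : C}
    [t.IsLE X 0] (hX : t.plus X) (hSX : S.rightOrthogonal X) : t.IsLE X (-1) := by
  rw [t.isLE_iff_isZero_truncGE_obj (-1) 0 (by lia)]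
  have := t.isLE_truncLT_obj X 0 (-1)
  have := t.isLE_shift ((t.truncLT 0).obj X) (-1) 1 (-2)
  have hlt : S.rightOrthogonal (((t.truncLT 0).obj X)⟦(1 : ℤ)⟧) :=
    rightOrthogonal_of_isLE_of_plus hS (by lia : (-2 : ℤ) < 0)
      (t.plus.le_shift 1 _ (plus_truncLT_obj t hX 0))
  refine hspan _ ((t.mem_heart_iff _).2
    ⟨isLE_truncGE_obj_of_isLE t X 0 0, t.isGE_truncGE_obj X 0 0⟩) ?_
  exact S.rightOrthogonal.ext_of_isTriangulatedClosed₂ _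
    (rot_of_distTriang _ (t.triangleLTGE_distinguished 0 X)) hSX hlt

lemma SpansHeart.isGE_one (hspan : SpansHeart t S) (hS : S ≤ heartProjective t) {X : C}
    [t.IsGE X 0] (hX : t.minus X) (hSX : S.rightOrthogonal X) : t.IsGE X 1 := by
  rw [t.isGE_iff_isZero_truncLT_obj]
  have := t.isGE_truncGE_obj X 1 1
  have := t.isGE_shift ((t.truncGE 1).obj X) 1 (-1) 2
  have hge : S.rightOrthogonal (((t.truncGE 1).obj X)⟦(-1 : ℤ)⟧) :=
    rightOrthogonal_of_isGE_of_minus hS (by lia : (0 : ℤ) < 2)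
      (t.minus.le_shift (-1) _ (minus_truncGE_obj t hX 1))
  refine hspan _ ((t.mem_heart_iff _).2
    ⟨t.isLE_truncLT_obj X 1 0, isGE_truncLT_obj_of_isGE t X 1 0⟩) ?_
  exact S.rightOrthogonal.ext_of_isTriangulatedClosed₂ _
    (inv_rot_of_distTriang _ (t.triangleLTGE_distinguished 1 X)) hge hSX

lemma SpansHeart.isLE_zero (hspan : SpansHeart t S) (hS : S ≤ heartProjective t) {M : C}
    (hM : t.bounded M) (hSM : ∀ k : ℤ, 0 < k → S.rightOrthogonal (M⟦k⟧)) : t.IsLE M 0 := by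
  obtain ⟨hplus, n, _⟩ := hM
  have descent (n : ℤ) (hn : 0 ≤ n) (hMn : t.IsLE M n) : t.IsLE M 0 := by
    induction n, hn using Int.leInduction with
    | base => exact hMn
    | succ n hn ih =>
      have := t.isLE_shift M (n + 1) (n + 1) 0
      have := hspan.isLE_neg_one hS (t.plus.le_shift (n + 1) _ hplus) (hSM (n + 1) (by lia))
      exact ih (t.isLE_of_shift M n (n + 1) (-1))
  exact descent (max n 0) (le_max_right n 0) (t.isLE_of_le M n (max n 0))

lemma SpansHeart.isGE_zero (hspan : SpansHeart t S) (hS : S ≤ heartProjective t) {M : C}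
    (hM : t.bounded M) (hSM : ∀ k : ℤ, k < 0 → S.rightOrthogonal (M⟦k⟧)) : t.IsGE M 0 := by
  obtain ⟨⟨n, _⟩, hminus⟩ := hM
  have ascent (n : ℤ) (hn : n ≤ 0) (hMn : t.IsGE M n) : t.IsGE M 0 := by
    induction n, hn using Int.leInductionDown with
    | base => exact hMn
    | pred n hn ih =>
      have := t.isGE_shift M (n - 1) (n - 1) 0
      have := hspan.isGE_one hS (t.minus.le_shift (n - 1) _ hminus) (hSM (n - 1) (by lia))
      exact ih (t.isGE_of_shift M n (n - 1) 1)
  exact ascent (min n 0) (min_le_right n 0) (t.isGE_of_ge M (min n 0) n)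

theorem statement_1_general (hS : S ≤ heartProjective t) (hspan : SpansHeart t S) {M : C}
    (hM : t.bounded M) :
    t.heart M ↔ ∀ P, S P → ∀ k : ℤ, k ≠ 0 → ∀ f : P ⟶ M⟦k⟧, f = 0 :=
  ⟨fun hMt P hP k hk f ↦ hS P hP k hk M hMt f, fun hSM ↦ (t.mem_heart_iff M).2
    ⟨hspan.isLE_zero hS hM fun k hk P f hP ↦ hSM P hP k hk.ne' f,
      hspan.isGE_zero hS hM fun k hk P f hP ↦ hSM P hP k hk.ne f⟩⟩

end Projective

namespace TStr

variable (T : TStr C)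

/-- The aisle of a bounded t-structure, as a property of objects. -/
def aisle : ObjectProperty C := fun X ↦ X ∈ T.P

instance : T.aisle.IsClosedUnderIsomorphisms where
  of_iso e := T.summand _ _ e.inv e.hom e.inv_hom_id

lemma rightOrthogonal_aisle_iff (X : C) : T.aisle.rightOrthogonal X ↔ X ∈ perp C T.P :=
  ⟨fun h _ hF f ↦ h f hF, fun h F f hF ↦ h F hF f⟩

lemma rightOrthogonal_aisle_le_shift :
    T.aisle.rightOrthogonal ≤ T.aisle.rightOrthogonal.shift (-1 : ℤ) := by
  intro X hX F f hF
  apply (shiftFunctor C (1 : ℤ)).map_injective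
  rw [Functor.map_zero]
  exact T.aisle.rightOrthogonal.prop_of_iso
    ((shiftFunctorCompIsoId C (-1 : ℤ) 1 (by lia)).symm.app X) hX _ (T.shift_mem F hF)

/-- The t-structure with aisle `T.P`, graded cohomologically: `X ≤ n` means `X⟦n⟧ ∈ T.P`. -/
def toTStructure : TStructure C where
  le n := T.aisle.shift n
  ge n := T.aisle.rightOrthogonal.shift (n - 1)
  le_shift n a n' h := (T.aisle.shift_shift a n' n h).ge
  ge_shift n a n' h := (T.aisle.rightOrthogonal.shift_shift a (n' - 1) (n - 1) (by lia)).ge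
  zero' X Y f hX hY := by
    rw [ObjectProperty.shift_zero] at hX
    rw [sub_self, ObjectProperty.shift_zero] at hY
    exact hY f hX
  le_zero_le := by
    rw [ObjectProperty.shift_zero]
    exact T.shift_mem
  ge_one_le := by
    rw [sub_self, ObjectProperty.shift_zero]
    exact T.rightOrthogonal_aisle_le_shift
  exists_triangle_zero_one A := by
    obtain ⟨F, G, f, g, h, hF, hG, mem⟩ := T.exists_triangle A
    rw [sub_self, ObjectProperty.shift_zero, ObjectProperty.shift_zero]
    exact ⟨F, G, hF, (T.rightOrthogonal_aisle_iff G).2 hG, f, g, h, mem⟩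

lemma heart_toTStructure_iff (X : C) : T.toTStructure.heart X ↔ X ∈ heart C T :=
  and_congr (T.aisle.prop_iff_of_iso ((shiftFunctorZero C ℤ).app X))
    (T.rightOrthogonal_aisle_iff _)

lemma bounded_toTStructure (X : C) : T.toTStructure.bounded X := by
  obtain ⟨a, ha⟩ := T.bounded_above X
  obtain ⟨b, hb⟩ := T.bounded_below X
  exact ⟨⟨b, ⟨(T.rightOrthogonal_aisle_iff _).2 (hb (b - 1) (by lia))⟩⟩, ⟨a, ⟨ha a le_rfl⟩⟩⟩

lemma heartProjective_toTStructure_iff (P : C) :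
    heartProjective T.toTStructure P ↔ IsProjOf C T P := by
  simp only [heartProjective, IsProjOf, heart_toTStructure_iff]

end TStr

variable (C)

/-- If the projectives of the heart `H` span it, then they determine it:
`M ∈ H` iff `Hom(P, M[k]) = 0` for every projective `P` of `H` and every `k ≠ 0`. -/
theorem statement_1 (T : TStr C)
    (hspan : ∀ M ∈ heart C T,
      (∀ P : C, IsProjOf C T P → ∀ f : P ⟶ M, f = 0) → IsZero M)
    (M : C) :
    M ∈ heart C T ↔
      ∀ P : C, IsProjOf C T P → ∀ k : ℤ, k ≠ 0 → ∀ f : P ⟶ M⟦k⟧, f = 0 :=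
  (T.heart_toTStructure_iff M).symm.trans <| statement_1_general
    (fun P hP ↦ (T.heartProjective_toTStructure_iff P).2 hP)
    (fun N hN hSN ↦ hspan N ((T.heart_toTStructure_iff N).1 hN) fun _ hP f ↦ hSN f hP)
    (T.bounded_toTStructure M)

end Paper
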